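/- Let R be a skew-invertible R-matrix on V⊗V with V = ℂ^N, and assume the operator B := Tr₍₁₎(Ψ) is invertible. Then for every associative unital ℂ-algebra A and every X ∈ Mat_N(A), the partial R-traces of the R-conjugates of X₁ are scalar: Tr₍₂₎(C₂·R₁·X₁·R₁⁻¹) = Tr_R(X)·I_N and Tr₍₂₎(C₂·R₁⁻¹·X₁·R₁) = Tr_R(X)·I_N in Mat_N(A), where X₁ = X⊗I_N ∈ Mat_{N²}(A), C₂ = I_N⊗C, and Tr₍₂₎ denotes the partial trace over the second tensor factor. -/

import Mathlib

open Matrix BigOperators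

/-- `X₁ = X ⊗ id` acting on the factors 1,2 of `(ℂ^N)^{⊗3}`. -/
noncomputable def up12 {N : ℕ} (X : Matrix (Fin N × Fin N) (Fin N × Fin N) ℂ) :
    Matrix (Fin N × Fin N × Fin N) (Fin N × Fin N × Fin N) ℂ :=
  Matrix.of fun p q => X (p.1, p.2.1) (q.1, q.2.1) * (if p.2.2 = q.2.2 then 1 else 0)

/-- `X₂ = id ⊗ X` acting on the factors 2,3 of `(ℂ^N)^{⊗3}`. -/
noncomputable def up23 {N : ℕ} (X : Matrix (Fin N × Fin N) (Fin N × Fin N) ℂ) :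
    Matrix (Fin N × Fin N × Fin N) (Fin N × Fin N × Fin N) ℂ :=
  Matrix.of fun p q => (if p.1 = q.1 then 1 else 0) * X (p.2.1, p.2.2) (q.2.1, q.2.2)

/-- The partial trace over the middle factor of `V^{⊗3}`, landing in `End(V⊗V)`
(factors 1 and 3). -/
noncomputable def ptrMid {N : ℕ}
    (Y : Matrix (Fin N × Fin N × Fin N) (Fin N × Fin N × Fin N) ℂ) :
    Matrix (Fin N × Fin N) (Fin N × Fin N) ℂ :=
  Matrix.of fun a d => ∑ b : Fin N, Y (a.1, b, a.2) (d.1, b, d.2)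

/-- The flip `P₁₃` on factors 1 and 3. -/
noncomputable def flip13 (N : ℕ) : Matrix (Fin N × Fin N) (Fin N × Fin N) ℂ :=
  Matrix.of fun p q => if p.1 = q.2 ∧ p.2 = q.1 then 1 else 0

/-- `B = Tr₍₁₎(Ψ)`. -/
noncomputable def Bmat {N : ℕ} (Ψ : Matrix (Fin N × Fin N) (Fin N × Fin N) ℂ) :
    Matrix (Fin N) (Fin N) ℂ :=
  Matrix.of fun p j => ∑ a : Fin N, Ψ (a, p) (a, j)

/-- `C = Tr₍₂₎(Ψ)`. -/
noncomputable def Cmat {N : ℕ} (Ψ : Matrix (Fin N × Fin N) (Fin N × Fin N) ℂ) :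
    Matrix (Fin N) (Fin N) ℂ :=
  Matrix.of fun i j => ∑ b : Fin N, Ψ (i, b) (j, b)

/-- `X₁ = X ⊗ I_N` for an `A`-valued matrix. -/
def lift1 {N : ℕ} {A : Type} [Ring A] (X : Matrix (Fin N) (Fin N) A) :
    Matrix (Fin N × Fin N) (Fin N × Fin N) A :=
  Matrix.of fun p q => X p.1 q.1 * (if p.2 = q.2 then 1 else 0)

/-- `X₂ = I_N ⊗ X` for an `A`-valued matrix. -/
def lift2nd {N : ℕ} {A : Type} [Ring A] (X : Matrix (Fin N) (Fin N) A) :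
    Matrix (Fin N × Fin N) (Fin N × Fin N) A :=
  Matrix.of fun p q => (if p.1 = q.1 then 1 else 0) * X p.2 q.2

/-- The partial trace over the second tensor factor, `Mat_{N²}(A) → Mat_N(A)`. -/
def ptr2 {N : ℕ} {A : Type} [Ring A]
    (Y : Matrix (Fin N × Fin N) (Fin N × Fin N) A) : Matrix (Fin N) (Fin N) A :=
  Matrix.of fun a d => ∑ b : Fin N, Y (a, b) (d, b)

/-- The `R`-trace `Tr_R(X) = Tr(C·X)` of an `A`-valued matrix. -/
def trR {N : ℕ} {A : Type} [Ring A] [Algebra ℂ A] (C : Matrix (Fin N) (Fin N) ℂ)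
    (X : Matrix (Fin N) (Fin N) A) : A :=
  ∑ i : Fin N, ∑ j : Fin N, algebraMap ℂ A (C i j) * X j i

/-!
The braid relation gives `R₂ R₁ R₂⁻¹ = R₁⁻¹ R₂ R₁`. Since `Tr₍₂₎(C₂ R) = 1`, applying `Tr₍₃₎(C₃ ·)`
to both sides shows that `X ↦ Tr₍₂₎(C₂ R X₁ R⁻¹)` sends the `(x, y)` block of `R` to `δ_{xy} • 1`,
and so does `X ↦ Tr(C X) • 1`. By skew-invertibility the blocks of `R` span the scalar matrices, so
the two linear maps agree there, and hence also on `A`-valued matrices because scalars are central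
in `A`. The other form `R₁ R₂ R₁⁻¹ = R₂⁻¹ R₁ R₂` gives the identity with `R` and `R⁻¹` exchanged.
-/

open scoped Kronecker

theorem mul_mul_inv_eq_inv_mul_mul_of_braid {M : Type*} [Monoid M] {a b a' b' : M}
    (hbraid : a * b * a = b * a * b) (ha : a' * a = 1) (hb : b * b' = 1) :
    b * a * b' = a' * b * a :=
  calc b * a * b' = a' * a * (b * a * b') := by rw [ha, one_mul]
    _ = a' * (a * b * a) * b' := by simp only [mul_assoc]
    _ = a' * b * a * (b * b') := by simp only [hbraid, mul_assoc]
    _ = a' * b * a := by rw [hb, mul_one]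

namespace YangBaxter

section PartialTrace

variable {l m n p q A : Type*} [Fintype n]

/-- The partial trace over the second tensor factor. -/
def partialTraceRight [AddCommMonoid A] (Y : Matrix (m × n) (p × n) A) : Matrix m p A :=
  of fun a d => ∑ b, Y (a, b) (d, b)

/-- The partial trace over the second of three tensor factors. -/
def partialTraceMid [AddCommMonoid A] (Y : Matrix (l × n × m) (p × n × q) A) :
    Matrix (l × m) (p × q) A :=
  of fun a d => ∑ b, Y (a.1, b, a.2) (d.1, b, d.2)

/-- The partial trace over the third of three tensor factors. -/
def partialTraceLast [AddCommMonoid A] (Y : Matrix (l × m × n) (p × q × n) A) :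
    Matrix (l × m) (p × q) A :=
  partialTraceRight (Y.submatrix (Equiv.prodAssoc l m n) (Equiv.prodAssoc p q n))

theorem partialTraceRight_add [AddCommMonoid A] (Y Z : Matrix (m × n) (p × n) A) :
    partialTraceRight (Y + Z) = partialTraceRight Y + partialTraceRight Z := by
  ext a d
  simp [partialTraceRight, Finset.sum_add_distrib]

theorem partialTraceRight_smul {K : Type*} [AddCommMonoid A] [DistribSMul K A] (c : K)
    (Y : Matrix (m × n) (p × n) A) :
    partialTraceRight (c • Y) = c • partialTraceRight Y := by
  ext a d
  simp [partialTraceRight, Finset.smul_sum]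

theorem partialTraceRight_map_smul {K : Type*} [Semiring K] [AddCommMonoid A] [Module K A]
    (Y : Matrix (m × n) (p × n) K) (x : A) :
    partialTraceRight (Y.map (· • x)) = (partialTraceRight Y).map (· • x) := by
  ext a d
  simp [partialTraceRight, Finset.sum_smul]

variable [DecidableEq n]

theorem partialTraceRight_kronecker_one_mul [Fintype m] [NonAssocSemiring A] (X : Matrix l m A)
    (Y : Matrix (m × n) (p × n) A) :
    partialTraceRight ((X ⊗ₖ (1 : Matrix n n A)) * Y) = X * partialTraceRight Y := by
  ext a d
  simp only [partialTraceRight, of_apply, mul_apply, kronecker_apply, one_apply, mul_ite, mul_one,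
    mul_zero, ite_mul, zero_mul, Fintype.sum_prod_type, Finset.sum_ite_eq, Finset.mem_univ,
    if_true, Finset.mul_sum]
  exact Finset.sum_comm

theorem partialTraceRight_mul_kronecker_one [Fintype p] [NonAssocSemiring A]
    (Y : Matrix (m × n) (p × n) A) (X : Matrix p l A) :
    partialTraceRight (Y * (X ⊗ₖ (1 : Matrix n n A))) = partialTraceRight Y * X := by
  ext a d
  simp only [partialTraceRight, of_apply, mul_apply, kronecker_apply, one_apply, mul_ite, mul_one,
    mul_zero, Fintype.sum_prod_type, Finset.sum_ite_eq', Finset.mem_univ,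
    if_true, Finset.sum_mul]
  exact Finset.sum_comm

end PartialTrace

section BaseChange

variable {l m n K A : Type*} [Fintype m] [CommSemiring K] [Semiring A] [Algebra K A]

theorem map_algebraMap_mul_map_smul (M : Matrix l m K) (Y : Matrix m n K) (x : A) :
    M.map (algebraMap K A) * Y.map (· • x) = (M * Y).map (· • x) := by
  ext i j
  simp [mul_apply, Finset.sum_smul, ← Algebra.smul_def, smul_smul, mul_comm]

theorem map_smul_mul_map_algebraMap (Y : Matrix l m K) (M : Matrix m n K) (x : A) :
    Y.map (· • x) * M.map (algebraMap K A) = (Y * M).map (· • x) := by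
  ext i j
  simp [mul_apply, Finset.sum_smul, ← Algebra.commutes, ← Algebra.smul_def, smul_smul]

end BaseChange

section Legs

variable {n K : Type*} [DecidableEq n] [CommSemiring K]

/-- `X₁ = X ⊗ id` on the triple tensor power, whose index set is bracketed as `n × (n × n)`. -/
def leg12 (X : Matrix (n × n) (n × n) K) : Matrix (n × n × n) (n × n × n) K :=
  (X ⊗ₖ (1 : Matrix n n K)).submatrix (Equiv.prodAssoc n n n).symm (Equiv.prodAssoc n n n).symm

/-- `X₂ = id ⊗ X` on the triple tensor power. -/
def leg23 (X : Matrix (n × n) (n × n) K) : Matrix (n × n × n) (n × n × n) K :=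
  (1 : Matrix n n K) ⊗ₖ X

/-- The flip `P` of the two tensor factors. -/
def flipMatrix (n K : Type*) [DecidableEq n] [Zero K] [One K] : Matrix (n × n) (n × n) K :=
  of fun p q => if p.1 = q.2 ∧ p.2 = q.1 then 1 else 0

theorem leg12_one : leg12 (1 : Matrix (n × n) (n × n) K) = 1 := by
  rw [leg12, one_kronecker_one, submatrix_one_equiv]

theorem leg23_one : leg23 (1 : Matrix (n × n) (n × n) K) = 1 :=
  one_kronecker_one

variable [Fintype n]

theorem leg12_mul (X Y : Matrix (n × n) (n × n) K) : leg12 (X * Y) = leg12 X * leg12 Y := by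
  rw [leg12, leg12, leg12, submatrix_mul_equiv, ← mul_kronecker_mul, one_mul]

theorem leg23_mul (X Y : Matrix (n × n) (n × n) K) : leg23 (X * Y) = leg23 X * leg23 Y := by
  rw [leg23, leg23, leg23, ← mul_kronecker_mul, one_mul]

theorem leg23_one_kronecker_mul_leg12 (C : Matrix n n K) (X : Matrix (n × n) (n × n) K) :
    leg23 (1 ⊗ₖ C) * leg12 X = leg12 X * leg23 (1 ⊗ₖ C) := by
  have hC : leg23 ((1 : Matrix n n K) ⊗ₖ C) = ((1 : Matrix (n × n) (n × n) K) ⊗ₖ C).submatrix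
      (Equiv.prodAssoc n n n).symm (Equiv.prodAssoc n n n).symm := by
    rw [← one_kronecker_one, kronecker_assoc']
    rfl
  rw [hC, leg12, submatrix_mul_equiv, submatrix_mul_equiv, ← mul_kronecker_mul,
    ← mul_kronecker_mul, one_mul, one_mul, mul_one, mul_one]

theorem partialTraceLast_leg12_mul_mul_leg12 (S T : Matrix (n × n) (n × n) K)
    (Y : Matrix (n × n × n) (n × n × n) K) :
    partialTraceLast (leg12 T * Y * leg12 S) = T * partialTraceLast Y * S := by
  rw [partialTraceLast, ← submatrix_mul_equiv _ _ _ (Equiv.prodAssoc n n n),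
    ← submatrix_mul_equiv _ _ _ (Equiv.prodAssoc n n n)]
  simp only [leg12, submatrix_submatrix, Equiv.symm_comp_self, submatrix_id_id]
  rw [partialTraceRight_mul_kronecker_one, partialTraceRight_kronecker_one_mul, partialTraceLast]

theorem partialTraceLast_leg23 (X : Matrix (n × n) (n × n) K) :
    partialTraceLast (leg23 X) = 1 ⊗ₖ partialTraceRight X := by
  ext ⟨x, a⟩ ⟨y, d⟩
  simp [partialTraceLast, partialTraceRight, leg23, Finset.mul_sum]

theorem partialTraceMid_leg12_mul_leg23_apply (X Y : Matrix (n × n) (n × n) K) (p i q j : n) :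
    partialTraceMid (leg12 X * leg23 Y) (p, i) (q, j) =
      ∑ y, ∑ x, X (p, y) (q, x) * Y (x, i) (y, j) := by
  simp [partialTraceMid, leg12, leg23, mul_apply, Fintype.sum_prod_type, one_apply]

theorem partialTraceRight_partialTraceMid (X Y : Matrix (n × n) (n × n) K) :
    partialTraceRight (partialTraceMid (leg12 X * leg23 Y)) =
      partialTraceRight ((1 ⊗ₖ partialTraceRight Y) * X) := by
  ext a d
  have hright (x : n) : ((1 ⊗ₖ partialTraceRight Y) * X : Matrix _ _ K) (a, x) (d, x) =
      ∑ y, ∑ k, X (a, y) (d, x) * Y (x, k) (y, k) := by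
    simp [partialTraceRight, mul_apply, one_apply, Fintype.sum_prod_type, ← Finset.mul_sum,
      mul_comm]
  calc ∑ k, partialTraceMid (leg12 X * leg23 Y) (a, k) (d, k)
      = ∑ k, ∑ x, ∑ y, X (a, y) (d, x) * Y (x, k) (y, k) := by
        simp only [partialTraceMid_leg12_mul_leg23_apply]
        exact Finset.sum_congr rfl fun _ _ => Finset.sum_comm
    _ = ∑ x, ∑ y, ∑ k, X (a, y) (d, x) * Y (x, k) (y, k) := by
        rw [Finset.sum_comm]
        exact Finset.sum_congr rfl fun _ _ => Finset.sum_comm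
    _ = ∑ x, ((1 ⊗ₖ partialTraceRight Y) * X : Matrix _ _ K) (a, x) (d, x) := by simp only [hright]

theorem partialTraceRight_flipMatrix : partialTraceRight (flipMatrix n K) = 1 := by
  ext a d
  simp [partialTraceRight, flipMatrix, one_apply, ite_and, eq_comm]

end Legs

section Block

variable {n K : Type*}

/-- The block of `Y` in position `(x, y)`, when an endomorphism of `V ⊗ W` is read as a matrix of
endomorphisms of `W`. -/
def block {m m' p p' : Type*} (Y : Matrix (m × p) (m' × p') K) (x : m) (y : m') : Matrix p p' K :=
  Y.submatrix (Prod.mk x) (Prod.mk y)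

variable [Fintype n] [DecidableEq n] [CommSemiring K]

theorem partialTraceRight_one_kronecker_mul_apply (C : Matrix n n K)
    (Y : Matrix (n × n) (n × n) K) (x y : n) :
    partialTraceRight ((1 ⊗ₖ C) * Y) x y = trace (C * block Y x y) := by
  simp [partialTraceRight, block, trace, mul_apply, Fintype.sum_prod_type, one_apply]

theorem block_leg23_mul_leg12_mul_leg23 (R S T : Matrix (n × n) (n × n) K) (x y : n) :
    block (leg23 S * leg12 R * leg23 T) x y = S * (block R x y ⊗ₖ 1) * T := by
  ext ⟨a, c⟩ ⟨d, b⟩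
  simp [block, leg12, leg23, mul_apply, Fintype.sum_prod_type, one_apply]

end Block

/-- `Ψ` is the skew inverse of `R`: `Tr₍₂₎(R₁₂ Ψ₂₃) = P₁₃ = Tr₍₂₎(Ψ₁₂ R₂₃)`. -/
structure IsSkewInverse {n K : Type*} [Fintype n] [DecidableEq n] [CommSemiring K]
    (R Ψ : Matrix (n × n) (n × n) K) : Prop where
  right : partialTraceMid (leg12 R * leg23 Ψ) = flipMatrix n K
  left : partialTraceMid (leg12 Ψ * leg23 R) = flipMatrix n K

namespace IsSkewInverse

variable {n K : Type*} [Fintype n] [DecidableEq n] [CommSemiring K]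
  {R Ψ : Matrix (n × n) (n × n) K}

theorem partialTraceRight_one_kronecker_mul (h : IsSkewInverse R Ψ) :
    partialTraceRight ((1 ⊗ₖ partialTraceRight Ψ) * R) = 1 := by
  rw [← partialTraceRight_partialTraceMid, h.right, partialTraceRight_flipMatrix]

theorem single_eq_sum_smul_block (h : IsSkewInverse R Ψ) (i j : n) :
    single i j (1 : K) = ∑ y, ∑ x, Ψ (j, y) (i, x) • block R x y := by
  ext k l
  have hleft := congrFun₂ h.left (j, k) (i, l)
  rw [partialTraceMid_leg12_mul_leg23_apply] at hleft
  simp [block, Matrix.sum_apply, hleft, flipMatrix, single_apply, and_comm, eq_comm]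

theorem span_range_block (h : IsSkewInverse R Ψ) :
    Submodule.span K (Set.range fun xy : n × n => block R xy.1 xy.2) = ⊤ := by
  rw [eq_top_iff]
  rintro X -
  rw [matrix_eq_sum_single X]
  refine Submodule.sum_mem _ fun i _ => Submodule.sum_mem _ fun j _ => ?_
  rw [← mul_one (X i j), ← smul_eq_mul, ← smul_single, h.single_eq_sum_smul_block]
  refine Submodule.smul_mem _ _ (Submodule.sum_mem _ fun y _ => Submodule.sum_mem _ fun x _ => ?_)
  exact Submodule.smul_mem _ _ (Submodule.subset_span ⟨(x, y), rfl⟩)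

theorem linearMap_ext_block (h : IsSkewInverse R Ψ) {A M : Type*} [AddCommMonoid A] [Module K A]
    [AddCommMonoid M] [Module K M] {f g : Matrix n n A →ₗ[K] M}
    (hfg : ∀ x y a, f ((block R x y).map (· • a)) = g ((block R x y).map (· • a))) : f = g := by
  refine ext_linearMap K fun i j => LinearMap.ext fun a => ?_
  let ι : Matrix n n K →ₗ[K] Matrix n n A := (LinearMap.toSpanSingleton K A a).mapMatrix
  have hι : f ∘ₗ ι = g ∘ₗ ι :=
    LinearMap.ext_on_range h.span_range_block fun xy => hfg xy.1 xy.2 a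
  simpa [ι, map_single] using LinearMap.congr_fun hι (single i j 1)

end IsSkewInverse

section TwistedTrace

variable {n K A : Type*} [Fintype n] [DecidableEq n] [CommSemiring K] [Semiring A] [Algebra K A]

variable (A) in
/-- The map `X ↦ Tr₍₂₎(C₂ S X₁ T)` on matrices over a `K`-algebra. -/
def twistedTrace (C : Matrix n n K) (S T : Matrix (n × n) (n × n) K) :
    Matrix n n A →ₗ[K] Matrix n n A where
  toFun X := partialTraceRight ((1 ⊗ₖ C.map (algebraMap K A)) * S.map (algebraMap K A) *
    (X ⊗ₖ 1) * T.map (algebraMap K A))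
  map_add' X Y := by simp only [add_kronecker, mul_add, add_mul, partialTraceRight_add]
  map_smul' c X := by
    simp only [smul_kronecker, Matrix.mul_smul, Matrix.smul_mul, partialTraceRight_smul,
      RingHom.id_apply]

theorem twistedTrace_map_smul (C : Matrix n n K) (S T : Matrix (n × n) (n × n) K)
    (Y : Matrix n n K) (x : A) :
    twistedTrace A C S T (Y.map (· • x)) =
      (partialTraceRight ((1 ⊗ₖ C) * S * (Y ⊗ₖ 1) * T)).map (· • x) := by
  have hC : (1 : Matrix n n A) ⊗ₖ C.map (algebraMap K A) = (1 ⊗ₖ C).map (algebraMap K A) := by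
    ext ⟨i, j⟩ ⟨k, l⟩
    by_cases hik : i = k <;> simp [one_apply, hik]
  have hY : Y.map (· • x) ⊗ₖ (1 : Matrix n n A) = (Y ⊗ₖ 1).map (· • x) := by
    ext ⟨i, j⟩ ⟨k, l⟩
    simp [one_apply]
  simp only [twistedTrace, LinearMap.coe_mk, AddHom.coe_mk]
  rw [hC, hY, ← Matrix.map_mul, map_algebraMap_mul_map_smul, map_smul_mul_map_algebraMap,
    partialTraceRight_map_smul]

variable (A) in
/-- The map `X ↦ Tr_R(X) • 1 = Tr(C X) • 1` on matrices over a `K`-algebra. -/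
def scalarRTrace (C : Matrix n n K) : Matrix n n A →ₗ[K] Matrix n n A :=
  (scalarAlgHom n K).toLinearMap ∘ₗ traceLinearMap n K A ∘ₗ
    LinearMap.mulLeft K (C.map (algebraMap K A))

theorem scalarRTrace_apply (C : Matrix n n K) (X : Matrix n n A) :
    scalarRTrace A C X = trace (C.map (algebraMap K A) * X) • (1 : Matrix n n A) := by
  simp [scalarRTrace, smul_one_eq_diagonal]

theorem scalarRTrace_map_smul (C Y : Matrix n n K) (x : A) :
    scalarRTrace A C (Y.map (· • x)) = (trace (C * Y) • (1 : Matrix n n K)).map (· • x) := by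
  rw [scalarRTrace_apply, map_algebraMap_mul_map_smul]
  have htrace : trace ((C * Y).map (· • x)) = trace (C * Y) • x := by
    simp [trace, Finset.sum_smul]
  ext i j
  by_cases hij : i = j <;> simp [one_apply, hij, htrace]

/-- `Tr₍₃₎(C₃ S₂ R₁ T₂) = Tr₍₃₎(C₃ T₁ R₂ S₁) = T Tr₍₂₎(C₂ R) S = 1`, read off in block `(x, y)`. -/
theorem partialTraceRight_mul_block_mul {C : Matrix n n K} {R S T : Matrix (n × n) (n × n) K}
    (hC : partialTraceRight ((1 ⊗ₖ C) * R) = 1) (hTS : T * S = 1)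
    (hbraid : leg23 S * leg12 R * leg23 T = leg12 T * leg23 R * leg12 S) (x y : n) :
    partialTraceRight ((1 ⊗ₖ C) * S * (block R x y ⊗ₖ 1) * T) =
      (1 : Matrix n n K) x y • (1 : Matrix n n K) := by
  have htrace : partialTraceLast (leg23 ((1 ⊗ₖ C) * S) * leg12 R * leg23 T) = 1 :=
    calc partialTraceLast (leg23 ((1 ⊗ₖ C) * S) * leg12 R * leg23 T)
        = partialTraceLast (leg23 (1 ⊗ₖ C) * leg12 T * leg23 R * leg12 S) := by
          rw [leg23_mul, mul_assoc, mul_assoc, ← mul_assoc (leg23 S), hbraid]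
          simp only [mul_assoc]
      _ = partialTraceLast (leg12 T * leg23 ((1 ⊗ₖ C) * R) * leg12 S) := by
          rw [leg23_one_kronecker_mul_leg12, leg23_mul, mul_assoc (leg12 T)]
      _ = 1 := by
          rw [partialTraceLast_leg12_mul_mul_leg12, partialTraceLast_leg23, hC, one_kronecker_one,
            mul_one, hTS]
  rw [← block_leg23_mul_leg12_mul_leg23]
  ext a d
  have hentry := congrFun₂ htrace (x, a) (y, d)
  rw [← one_kronecker_one] at hentry
  exact hentry

theorem twistedTrace_eq_scalarRTrace {R Ψ S T : Matrix (n × n) (n × n) K}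
    (hΨ : IsSkewInverse R Ψ) (hTS : T * S = 1)
    (hbraid : leg23 S * leg12 R * leg23 T = leg12 T * leg23 R * leg12 S) :
    twistedTrace A (partialTraceRight Ψ) S T = scalarRTrace A (partialTraceRight Ψ) := by
  have hC := hΨ.partialTraceRight_one_kronecker_mul
  refine hΨ.linearMap_ext_block fun x y a => ?_
  rw [twistedTrace_map_smul, scalarRTrace_map_smul, partialTraceRight_mul_block_mul hC hTS hbraid,
    ← partialTraceRight_one_kronecker_mul_apply, hC]

end TwistedTrace

end YangBaxter

open YangBaxter in
theorem rtrace_of_conjugates_scalar_general {n K : Type*} [Fintype n] [DecidableEq n]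
    [CommSemiring K] {R Rinv Ψ : Matrix (n × n) (n × n) K}
    (hYB : leg12 R * leg23 R * leg12 R = leg23 R * leg12 R * leg23 R)
    (hRinv : R * Rinv = 1 ∧ Rinv * R = 1) (hΨ : IsSkewInverse R Ψ)
    {A : Type*} [Semiring A] [Algebra K A] (X : Matrix n n A) :
    partialTraceRight ((1 ⊗ₖ (partialTraceRight Ψ).map (algebraMap K A)) *
        R.map (algebraMap K A) * (X ⊗ₖ 1) * Rinv.map (algebraMap K A)) =
      trace ((partialTraceRight Ψ).map (algebraMap K A) * X) • (1 : Matrix n n A) ∧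
    partialTraceRight ((1 ⊗ₖ (partialTraceRight Ψ).map (algebraMap K A)) *
        Rinv.map (algebraMap K A) * (X ⊗ₖ 1) * R.map (algebraMap K A)) =
      trace ((partialTraceRight Ψ).map (algebraMap K A) * X) • (1 : Matrix n n A) := by
  have leg12_inv {S T : Matrix (n × n) (n × n) K} (h : S * T = 1) : leg12 S * leg12 T = 1 := by
    rw [← leg12_mul, h, leg12_one]
  have leg23_inv {S T : Matrix (n × n) (n × n) K} (h : S * T = 1) : leg23 S * leg23 T = 1 := by
    rw [← leg23_mul, h, leg23_one]
  have hbraid : leg23 R * leg12 R * leg23 Rinv = leg12 Rinv * leg23 R * leg12 R :=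
    mul_mul_inv_eq_inv_mul_mul_of_braid hYB (leg12_inv hRinv.2) (leg23_inv hRinv.1)
  have hbraid' : leg12 R * leg23 R * leg12 Rinv = leg23 Rinv * leg12 R * leg23 R :=
    mul_mul_inv_eq_inv_mul_mul_of_braid hYB.symm (leg23_inv hRinv.2) (leg12_inv hRinv.1)
  rw [← scalarRTrace_apply]
  exact ⟨LinearMap.congr_fun (twistedTrace_eq_scalarRTrace hΨ hRinv.2 hbraid) X,
    LinearMap.congr_fun (twistedTrace_eq_scalarRTrace hΨ hRinv.1 hbraid'.symm) X⟩

/-- For a skew-invertible R-matrix with invertible `B = Tr₍₁₎(Ψ)`, the partial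
R-traces of the R-conjugates of `X₁` are scalar:
`Tr₍₂₎(C₂·R₁·X₁·R₁⁻¹) = Tr_R(X)·I` and `Tr₍₂₎(C₂·R₁⁻¹·X₁·R₁) = Tr_R(X)·I`. -/
theorem rtrace_of_conjugates_scalar (N : ℕ) (hN : 1 ≤ N)
    (R Rinv Ψ : Matrix (Fin N × Fin N) (Fin N × Fin N) ℂ)
    (hYB : up12 R * up23 R * up12 R = up23 R * up12 R * up23 R)
    (hRinv : R * Rinv = 1 ∧ Rinv * R = 1)
    (hskew : ptrMid (up12 R * up23 Ψ) = flip13 N ∧ ptrMid (up12 Ψ * up23 R) = flip13 N)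
    (hB : IsUnit (Bmat Ψ))
    (A : Type) [Ring A] [Algebra ℂ A] (X : Matrix (Fin N) (Fin N) A) :
    ptr2 (lift2nd ((Cmat Ψ).map (algebraMap ℂ A)) * R.map (algebraMap ℂ A)
        * lift1 X * Rinv.map (algebraMap ℂ A))
      = trR (Cmat Ψ) X • (1 : Matrix (Fin N) (Fin N) A)
    ∧ ptr2 (lift2nd ((Cmat Ψ).map (algebraMap ℂ A)) * Rinv.map (algebraMap ℂ A)
        * lift1 X * R.map (algebraMap ℂ A))
      = trR (Cmat Ψ) X • (1 : Matrix (Fin N) (Fin N) A) :=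
  -- The operations above are definitionally the general ones at index type `Fin N`.
  rtrace_of_conjugates_scalar_general hYB hRinv ⟨hskew.1, hskew.2⟩ X
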